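/- Under the stated hypotheses, if the convex hull K(σ) of σ does not intersect Σ and ‖V‖ < √2·d, then ‖E_A(σ) − E_B(O_d(σ))‖ < 1. -/

import Mathlib

/-- `E` is the projection-valued spectral measure of the bounded self-adjoint operator `T`
on the complex Hilbert space `H`: each `E Δ` (for Borel `Δ ⊆ ℝ`) is an orthogonal
projection, `E` is multiplicative and countably additive (in the strong sense), `E ℝ = 1`,
each `E Δ` commutes with `T`, and on the range of `E Δ` the operator `T` has its
approximate point spectrum inside the closure of `Δ` (which uniquely characterizes the
spectral measure of `T`). -/
structure IsSpectralMeasure {H : Type*} [NormedAddCommGroup H] [InnerProductSpace ℂ H]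
    [CompleteSpace H] (T : H →L[ℂ] H) (E : Set ℝ → H →L[ℂ] H) : Prop where
  isSelfAdjoint : ∀ Δ : Set ℝ, MeasurableSet Δ → IsSelfAdjoint (E Δ)
  map_inter : ∀ Δ₁ Δ₂ : Set ℝ, MeasurableSet Δ₁ → MeasurableSet Δ₂ →
    E Δ₁ * E Δ₂ = E (Δ₁ ∩ Δ₂)
  map_univ : E Set.univ = 1
  countably_additive : ∀ Δ : ℕ → Set ℝ, (∀ n, MeasurableSet (Δ n)) →
    Pairwise (Function.onFun Disjoint Δ) →
    ∀ x : H, HasSum (fun n => E (Δ n) x) (E (⋃ n, Δ n) x)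
  commutes : ∀ Δ : Set ℝ, MeasurableSet Δ → Commute T (E Δ)
  spectrum_loc : ∀ Δ : Set ℝ, MeasurableSet Δ → ∀ x : H, E Δ x = x →
    ∀ μ : ℝ, Metric.infDist μ Δ * ‖x‖ ≤ ‖T x - (μ : ℂ) • x‖

section

variable {H : Type*} [NormedAddCommGroup H] [InnerProductSpace ℂ H]

theorem offDiagonal_inner_lower_bound {E : Type*} [NormedAddCommGroup E] [InnerProductSpace ℝ E]
    {r ρ v μ : ℝ} (hρ : 0 ≤ ρ) (hμ : 0 ≤ μ) {x₀ x₁ t₀ t₁ v₀ v₁ : E}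
    (ht₀ : ‖t₀‖ ≤ r * ‖x₀‖) (ht₁ : ρ * ‖x₁‖ ≤ ‖t₁‖) (hv₀ : ‖v₀‖ ≤ v * ‖x₀‖)
    (hv : inner ℝ v₁ x₀ = inner ℝ v₀ x₁) :
    (2 * μ * (μ - r) - v ^ 2) * ‖x₀‖ ^ 2 + (ρ ^ 2 - μ ^ 2) * ‖x₁‖ ^ 2 ≤
      inner ℝ (t₀ + v₁ - μ • x₀) (-(2 * μ) • x₀) +
        inner ℝ (t₁ + v₀ - μ • x₁) (t₁ + μ • x₁ - v₀) := by
  have e₁ : inner ℝ (t₀ + v₁ - μ • x₀) (-(2 * μ) • x₀) =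
      2 * μ * (μ * ‖x₀‖ ^ 2 - inner ℝ t₀ x₀ - inner ℝ v₁ x₀) := by
    simp only [inner_sub_left, inner_add_left, inner_smul_left, inner_smul_right,
      real_inner_self_eq_norm_sq, conj_trivial]
    ring
  have e₂ : inner ℝ (t₁ + v₀ - μ • x₁) (t₁ + μ • x₁ - v₀) =
      ‖t₁‖ ^ 2 - ‖v₀‖ ^ 2 + 2 * μ * inner ℝ v₀ x₁ - μ ^ 2 * ‖x₁‖ ^ 2 := by
    simp only [inner_sub_left, inner_add_left, inner_sub_right, inner_add_right, inner_smul_left,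
      inner_smul_right, real_inner_self_eq_norm_sq, conj_trivial]
    rw [real_inner_comm v₀ t₁, real_inner_comm t₁ x₁, real_inner_comm x₁ v₀]
    ring
  have h₁ : inner ℝ t₀ x₀ ≤ r * ‖x₀‖ ^ 2 :=
    (real_inner_le_norm _ _).trans (by nlinarith [norm_nonneg x₀])
  have h₂ : (ρ * ‖x₁‖) ^ 2 ≤ ‖t₁‖ ^ 2 := by gcongr
  have h₃ : ‖v₀‖ ^ 2 ≤ (v * ‖x₀‖) ^ 2 := by gcongr
  rw [e₁, e₂, hv]
  nlinarith [mul_le_mul_of_nonneg_left h₁ hμ]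

namespace IsStarProjection

variable [CompleteSpace H] {P Q : H →L[ℂ] H}

theorem apply_apply (hP : IsStarProjection P) (x : H) : P (P x) = P x :=
  congr($(hP.isIdempotentElem.eq) x)

theorem inner_apply_left (hP : IsStarProjection P) (x y : H) :
    inner ℂ (P x) y = inner ℂ x (P y) :=
  hP.isSelfAdjoint.isSymmetric x y

theorem inner_eq_zero (hP : IsStarProjection P) {x y : H} (hx : P x = x) (hy : P y = 0) :
    inner ℂ x y = 0 := by
  rw [← hx, hP.inner_apply_left, hy, inner_zero_right]

theorem norm_add_sq_eq (hP : IsStarProjection P) {x y : H} (hx : P x = x) (hy : P y = 0) :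
    ‖x + y‖ ^ 2 = ‖x‖ ^ 2 + ‖y‖ ^ 2 := by
  simpa only [sq] using norm_add_sq_eq_norm_sq_add_norm_sq_of_inner_eq_zero x y
    (hP.inner_eq_zero hx hy)

theorem norm_sq_eq (hP : IsStarProjection P) (x : H) :
    ‖x‖ ^ 2 = ‖P x‖ ^ 2 + ‖x - P x‖ ^ 2 := by
  rw [← hP.norm_add_sq_eq (hP.apply_apply x) (by simp [hP.apply_apply]), add_sub_cancel]

theorem norm_apply_le (hP : IsStarProjection P) (x : H) : ‖P x‖ ≤ ‖x‖ := by
  have := hP.norm_sq_eq x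
  exact le_of_sq_le_sq (by nlinarith [sq_nonneg ‖x - P x‖]) (norm_nonneg _)

theorem norm_sub_apply_le (hP : IsStarProjection P) (x : H) : ‖x - P x‖ ≤ ‖x‖ := by
  have := hP.norm_sq_eq x
  exact le_of_sq_le_sq (by nlinarith [sq_nonneg ‖P x‖]) (norm_nonneg _)

end IsStarProjection

/-- `V` maps the range of `P` into its kernel and vice versa. -/
structure IsOffDiagonal (P V : H →L[ℂ] H) : Prop where
  apply_range : ∀ x, P (V (P x)) = 0
  apply_ker : ∀ x, P (V (x - P x)) = V (x - P x)

theorem exists_pos_mul_norm_le_of_pos [CompleteSpace H] {P T V : H →L[ℂ] H} {r s ρ μ : ℝ}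
    (hP : IsStarProjection P) (hV : IsSelfAdjoint V) (hTP : Commute T P) (hPV : IsOffDiagonal P V)
    (hT₀ : ∀ x, P x = x → ‖T x‖ ≤ r * ‖x‖) (hT₁ : ∀ x, P x = 0 → ρ * ‖x‖ ≤ ‖T x‖)
    (hr : 0 ≤ r) (hs : 0 < s) (hVs : ‖V‖ ^ 2 < 2 * s ^ 2) (hμ : r + s < μ) (hμρ : μ < ρ) :
    ∃ c > 0, ∀ x, c * ‖x‖ ≤ ‖T x + V x - (μ : ℂ) • x‖ := by
  set ε := min (2 * μ * (μ - r) - ‖V‖ ^ 2) (ρ ^ 2 - μ ^ 2)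
  have hμ0 : 0 < μ := by linarith
  have hε : 0 < ε := lt_min (by nlinarith) (by nlinarith)
  set K := ‖T‖ + μ + ‖V‖ + 2 * μ
  have hK : 0 < K := by positivity
  refine ⟨ε / K, by positivity, fun x ↦ ?_⟩
  set x₀ := P x with hx₀
  set x₁ := x - P x with hx₁
  have hPx₀ : P x₀ = x₀ := hP.apply_apply x
  have hPx₁ : P x₁ = 0 := by simp [hx₁, hP.apply_apply]
  have hPT (y : H) : P (T y) = T (P y) := congr($(hTP.eq.symm) y)
  have hPVx₀ : P (V x₀) = 0 := hPV.apply_range x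
  have hPVx₁ : P (V x₁) = V x₁ := hPV.apply_ker x
  set y₀ := T x₀ + V x₁ - μ • x₀
  set y₁ := T x₁ + V x₀ - μ • x₁
  set w₀ := -(2 * μ) • x₀
  set w₁ := T x₁ + μ • x₁ - V x₀
  have hPr (a : ℝ) (z : H) : P (a • z) = a • P z := P.map_smul_of_tower a z
  have hy₀ : P y₀ = y₀ := by simp [y₀, hPT, hPVx₁, hPx₀, hPr]
  have hy₁ : P y₁ = 0 := by simp [y₁, hPT, hPVx₀, hPx₁, hPr]
  have hw₀ : P w₀ = w₀ := by simp [w₀, hPx₀, hPr]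
  have hw₁ : P w₁ = 0 := by simp [w₁, hPT, hPVx₀, hPx₁, hPr]
  have hx : x = x₀ + x₁ := by simp [hx₀, hx₁]
  have hy : T x + V x - (μ : ℂ) • x = y₀ + y₁ := by
    rw [hx]; simp only [map_add, y₀, y₁, Complex.coe_smul, smul_add]; abel
  let _ : InnerProductSpace ℝ H := InnerProductSpace.complexToReal
  have key := offDiagonal_inner_lower_bound (x₀ := x₀) (x₁ := x₁) (v₁ := V x₁)
    (hμ0.trans hμρ).le hμ0.le
    (hT₀ _ hPx₀) (hT₁ _ hPx₁) (V.le_opNorm x₀) (by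
      rw [real_inner_eq_re_inner ℂ, real_inner_eq_re_inner ℂ, ← inner_conj_symm, RCLike.conj_re]
      exact congr_arg _ (hV.isSymmetric _ _).symm)
  have hyw : inner ℝ (y₀ + y₁) (w₀ + w₁) = inner ℝ y₀ w₀ + inner ℝ y₁ w₁ := by
    have h₁ : inner ℝ y₀ w₁ = 0 := by
      rw [real_inner_eq_re_inner ℂ, hP.inner_eq_zero hy₀ hw₁, map_zero]
    have h₂ : inner ℝ w₀ y₁ = 0 := by
      rw [real_inner_eq_re_inner ℂ, hP.inner_eq_zero hw₀ hy₁, map_zero]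
    rw [inner_add_left, inner_add_right, inner_add_right, h₁,
      (real_inner_comm _ _).trans h₂]
    ring
  have hn₀ : ‖x₀‖ ≤ ‖x‖ := hP.norm_apply_le x
  have hn₁ : ‖x₁‖ ≤ ‖x‖ := hP.norm_sub_apply_le x
  have hw : ‖w₀ + w₁‖ ≤ K * ‖x‖ := by
    have e₁ : ‖w₀‖ = 2 * μ * ‖x₀‖ := by
      simp [w₀, norm_smul, abs_of_pos hμ0]
    have e₂ : ‖w₁‖ ≤ ‖T‖ * ‖x₁‖ + μ * ‖x₁‖ + ‖V‖ * ‖x₀‖ := by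
      refine (norm_sub_le _ _).trans (add_le_add ((norm_add_le _ _).trans
        (add_le_add (T.le_opNorm _) ?_)) (V.le_opNorm _))
      rw [norm_smul, Real.norm_of_nonneg hμ0.le]
    calc ‖w₀ + w₁‖ ≤ 2 * μ * ‖x₀‖ + (‖T‖ * ‖x₁‖ + μ * ‖x₁‖ + ‖V‖ * ‖x₀‖) :=
          (norm_add_le _ _).trans (by linarith)
      _ ≤ 2 * μ * ‖x‖ + (‖T‖ * ‖x‖ + μ * ‖x‖ + ‖V‖ * ‖x‖) := by gcongr
      _ = K * ‖x‖ := by ring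
  have hlow : ε * ‖x‖ ^ 2 ≤ ‖y₀ + y₁‖ * (K * ‖x‖) := by
    have := hP.norm_sq_eq x
    calc ε * ‖x‖ ^ 2 = ε * ‖x₀‖ ^ 2 + ε * ‖x₁‖ ^ 2 := by rw [this]; ring
      _ ≤ (2 * μ * (μ - r) - ‖V‖ ^ 2) * ‖x₀‖ ^ 2 + (ρ ^ 2 - μ ^ 2) * ‖x₁‖ ^ 2 := by
        gcongr
        exacts [min_le_left _ _, min_le_right _ _]
      _ ≤ inner ℝ (y₀ + y₁) (w₀ + w₁) := key.trans hyw.ge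
      _ ≤ ‖y₀ + y₁‖ * ‖w₀ + w₁‖ := real_inner_le_norm _ _
      _ ≤ _ := by gcongr
  rw [hy, div_mul_eq_mul_div, div_le_iff₀ hK]
  rcases (norm_nonneg x).eq_or_lt with h | h
  · rw [← h, mul_zero]; positivity
  · refine le_of_mul_le_mul_right ?_ h
    linarith

theorem exists_pos_mul_norm_le [CompleteSpace H] {P T V : H →L[ℂ] H} {r s ρ μ : ℝ}
    (hP : IsStarProjection P) (hV : IsSelfAdjoint V) (hTP : Commute T P) (hPV : IsOffDiagonal P V)
    (hT₀ : ∀ x, P x = x → ‖T x‖ ≤ r * ‖x‖) (hT₁ : ∀ x, P x = 0 → ρ * ‖x‖ ≤ ‖T x‖)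
    (hr : 0 ≤ r) (hs : 0 < s) (hVs : ‖V‖ ^ 2 < 2 * s ^ 2) (hμ : r + s < |μ|) (hμρ : |μ| < ρ) :
    ∃ c > 0, ∀ x, c * ‖x‖ ≤ ‖T x + V x - (μ : ℂ) • x‖ := by
  rcases abs_cases μ with ⟨h, -⟩ | ⟨h, -⟩
  · exact exists_pos_mul_norm_le_of_pos hP hV hTP hPV hT₀ hT₁ hr hs hVs (h ▸ hμ) (h ▸ hμρ)
  · obtain ⟨c, hc, hcx⟩ := exists_pos_mul_norm_le_of_pos (T := -T) (V := -V) hP hV.neg hTP.neg_left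
      ⟨fun x ↦ by simp [hPV.apply_range], fun x ↦ by
        simp only [neg_apply, map_neg, hPV.apply_ker x]⟩
      (by simpa using hT₀) (by simpa using hT₁) hr hs (by simpa using hVs) (h ▸ hμ) (h ▸ hμρ)
    refine ⟨c, hc, fun x ↦ (hcx x).trans_eq ?_⟩
    rw [← norm_neg]
    congr 1
    simp only [Complex.ofReal_neg, neg_apply, neg_smul]
    abel

/-- Invertibility at points far from both diagonal blocks. -/
theorem exists_pos_mul_norm_le_of_blocks [CompleteSpace H] {P S V : H →L[ℂ] H} {d : ℝ}
    (hP : IsStarProjection P) (hSP : Commute S P) (hPV : IsOffDiagonal P V)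
    (hS₀ : ∀ x, P x = x → d * ‖x‖ ≤ ‖S x‖) (hS₁ : ∀ x, P x = 0 → 2 * d * ‖x‖ ≤ ‖S x‖)
    (hd : 0 < d) (hVd : ‖V‖ ^ 2 < 2 * d ^ 2) :
    ∃ c > 0, ∀ x, c * ‖x‖ ≤ ‖S x + V x‖ := by
  have hδ : 0 < 2 * d ^ 2 - ‖V‖ ^ 2 := by linarith
  have hK : 0 < 3 * d + 2 * ‖V‖ := by positivity
  refine ⟨(2 * d ^ 2 - ‖V‖ ^ 2) / (3 * d + 2 * ‖V‖), by positivity, fun x ↦ ?_⟩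
  set x₀ := P x with hx₀
  set x₁ := x - P x with hx₁
  have hPx₀ : P x₀ = x₀ := hP.apply_apply x
  have hPx₁ : P x₁ = 0 := by simp [hx₁, hP.apply_apply]
  have hPS (y : H) : P (S y) = S (P y) := congr($(hSP.eq.symm) y)
  have hx : x = x₀ + x₁ := by simp [hx₀, hx₁]
  have hPy : P (S x + V x) = S x₀ + V x₁ := by
    rw [hx]
    simp only [map_add, hPS, hPx₀, hPx₁, map_zero, hPV.apply_range x, x₀, x₁, hPV.apply_ker x]
    simp
  have hQy : S x + V x - P (S x + V x) = S x₁ + V x₀ := by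
    rw [hPy]
    conv_lhs => rw [hx]
    simp only [map_add]; abel
  have h₀ : ‖S x₀ + V x₁‖ ≤ ‖S x + V x‖ := hPy ▸ hP.norm_apply_le _
  have h₁ : ‖S x₁ + V x₀‖ ≤ ‖S x + V x‖ := hQy ▸ hP.norm_sub_apply_le _
  have g₀ : d * ‖x₀‖ ≤ ‖S x + V x‖ + ‖V‖ * ‖x₁‖ := by
    have := norm_sub_le (S x₀ + V x₁) (V x₁)
    rw [add_sub_cancel_right] at this
    linarith [hS₀ _ hPx₀, V.le_opNorm x₁]
  have g₁ : 2 * d * ‖x₁‖ ≤ ‖S x + V x‖ + ‖V‖ * ‖x₀‖ := by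
    have := norm_sub_le (S x₁ + V x₀) (V x₀)
    rw [add_sub_cancel_right] at this
    linarith [hS₁ _ hPx₁, V.le_opNorm x₀]
  rw [div_mul_eq_mul_div, div_le_iff₀ hK]
  have hxn : ‖x‖ ≤ ‖x₀‖ + ‖x₁‖ := hx ▸ norm_add_le _ _
  nlinarith [mul_le_mul_of_nonneg_left g₀ hd.le, mul_le_mul_of_nonneg_left g₁ hd.le,
    mul_le_mul_of_nonneg_left g₀ (norm_nonneg V), mul_le_mul_of_nonneg_left g₁ (norm_nonneg V),
    mul_le_mul_of_nonneg_left hxn hδ.le]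

/-- If two projections are at distance less than one, then a bound for one of the two compressions
controls their distance. -/
theorem IsStarProjection.norm_sub_le_of_norm_sub_lt_one [CompleteSpace H] {P Q : H →L[ℂ] H} {ε : ℝ}
    (hP : IsStarProjection P) (hQ : IsStarProjection Q) (hε : 0 ≤ ε) (hε1 : ε ≤ 1)
    (h : ∀ x, Q x = x → ε * ‖x‖ ≤ ‖P x‖) (hPQ : ‖P - Q‖ < 1) :
    ‖P - Q‖ ≤ √(1 - ε ^ 2) := by
  have hε2 : 0 ≤ 1 - ε ^ 2 := by nlinarith
  have hPP := hP.isIdempotentElem.eq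
  have hQQ := hQ.isIdempotentElem.eq
  have hQP (x : H) (hx : P x = x) : ε * ‖x‖ ≤ ‖Q x‖ := by
    have hD : ‖(P - Q) * (P - Q)‖ < 1 :=
      (norm_mul_le _ _).trans_lt (by nlinarith [norm_nonneg (P - Q)])
    obtain ⟨u, hu⟩ := isUnit_one_sub_of_norm_lt_one hD
    set w := (↑u⁻¹ : H →L[ℂ] H) x
    have hw : (1 - (P - Q) * (P - Q)) w = x := by
      rw [← hu]; exact congr($(u.mul_inv) x)
    have hop : P * (1 - (P - Q) * (P - Q)) = P * Q * P := by
      have hPPQ : P * (P * Q) = P * Q := by rw [← mul_assoc, hPP]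
      simp only [mul_sub, sub_mul, mul_one, hPP, hQQ, hPPQ, mul_assoc]
      abel
    have hz : P (Q (P w)) = x := by
      have := congr($hop w)
      simp only [mul_apply_eq_comp, hw, hx] at this
      exact this.symm
    set z := Q (P w)
    have hQz : Q z = z := hQ.apply_apply _
    have h1 : inner ℂ (Q x) z = inner ℂ x x := by
      rw [hQ.inner_apply_left, hQz]
      conv_lhs => rw [← hx]
      rw [hP.inner_apply_left, hz]
    have h2 : ‖x‖ ^ 2 ≤ ‖Q x‖ * ‖z‖ := by
      have := norm_inner_le_norm (𝕜 := ℂ) (Q x) z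
      rw [h1, inner_self_eq_norm_sq_to_K] at this
      simpa using this
    have h3 := h z hQz
    rw [hz] at h3
    rcases (norm_nonneg x).eq_or_lt with h0 | h0
    · rw [← h0, mul_zero]; positivity
    · refine le_of_mul_le_mul_right ?_ h0
      nlinarith [mul_le_mul_of_nonneg_left h3 (norm_nonneg (Q x))]
  have hPx (x : H) (hx : P x = x) : ‖x - Q x‖ ^ 2 ≤ (1 - ε ^ 2) * ‖x‖ ^ 2 := by
    have := hQ.norm_sq_eq x
    have h2 : (ε * ‖x‖) ^ 2 ≤ ‖Q x‖ ^ 2 := by gcongr; exact hQP x hx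
    linarith
  have hQx (x : H) (hx : P x = 0) : ‖Q x‖ ^ 2 ≤ (1 - ε ^ 2) * ‖x‖ ^ 2 := by
    have h1 : ‖Q x - P (Q x)‖ ^ 2 ≤ (1 - ε ^ 2) * ‖Q x‖ ^ 2 := by
      have := hP.norm_sq_eq (Q x)
      have h2 : (ε * ‖Q x‖) ^ 2 ≤ ‖P (Q x)‖ ^ 2 := by gcongr; exact h _ (hQ.apply_apply x)
      linarith
    have h2 : inner ℂ (Q x - P (Q x)) x = inner ℂ (Q x) (Q x) := by
      rw [inner_sub_left, hP.inner_apply_left, hx, inner_zero_right, sub_zero,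
        hQ.inner_apply_left x (Q x), hQ.apply_apply,
        hQ.inner_apply_left]
    have h3 : ‖Q x‖ ^ 2 ≤ ‖Q x - P (Q x)‖ * ‖x‖ := by
      have := norm_inner_le_norm (𝕜 := ℂ) (Q x - P (Q x)) x
      rw [h2, inner_self_eq_norm_sq_to_K] at this
      simpa using this
    rcases (norm_nonneg (Q x)).eq_or_lt with h0 | h0
    · rw [← h0, zero_pow two_ne_zero]; positivity
    · have h4 : (‖Q x‖ ^ 2) ^ 2 ≤ (‖Q x - P (Q x)‖ * ‖x‖) ^ 2 := by gcongr
      refine le_of_mul_le_mul_right ?_ (pow_pos h0 2)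
      nlinarith [mul_le_mul_of_nonneg_right h1 (sq_nonneg ‖x‖)]
  refine ContinuousLinearMap.opNorm_le_bound _ (Real.sqrt_nonneg _) fun x ↦ ?_
  refine le_of_sq_le_sq ?_ (by positivity)
  rw [mul_pow, Real.sq_sqrt hε2]
  have hdec : (P - Q) x = -Q (x - P x) + (P x - Q (P x)) := by
    simp only [sub_apply, map_sub]; abel
  have hPx' := hPx (P x) (hP.apply_apply x)
  have hQx' := hQx (x - P x) (by simp [hP.apply_apply])
  rw [hdec, hQ.norm_add_sq_eq (by simp [hQ.apply_apply]) (by simp [hQ.apply_apply]), norm_neg]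
  have := hP.norm_sq_eq x
  nlinarith

theorem IsSelfAdjoint.notMem_spectrum_of_mul_norm_le [CompleteSpace H] {T : H →L[ℂ] H}
    (hT : IsSelfAdjoint T) {μ c : ℝ} (hc : 0 < c) (h : ∀ x, c * ‖x‖ ≤ ‖T x - (μ : ℂ) • x‖) :
    μ ∉ spectrum ℝ T := by
  rw [spectrum.notMem_iff, ← IsUnit.neg_iff, neg_sub]
  set S := T - algebraMap ℝ (H →L[ℂ] H) μ with hS
  have hSx (x : H) : S x = T x - (μ : ℂ) • x := by
    simp [hS, Algebra.algebraMap_eq_smul_one]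
  have hSsa : IsSelfAdjoint S := hT.sub (.algebraMap _ (.all μ))
  have hanti : AntilipschitzWith c.toNNReal⁻¹ S := by
    refine S.antilipschitz_of_bound fun x ↦ ?_
    rw [NNReal.coe_inv, Real.coe_toNNReal c hc.le, ← div_eq_inv_mul, le_div_iff₀' hc, hSx]
    exact h x
  rw [ContinuousLinearMap.isUnit_iff_bijective,
    ContinuousLinearMap.bijective_iff_dense_range_and_antilipschitz]
  refine ⟨?_, _, hanti⟩
  rw [Submodule.topologicalClosure_eq_top_iff, S.orthogonal_range, hSsa.adjoint_eq]
  exact LinearMap.ker_eq_bot.mpr hanti.injective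

theorem exists_pos_mul_norm_le_of_notMem_spectrum [CompleteSpace H] {T : H →L[ℂ] H} {μ : ℝ}
    (hμ : μ ∉ spectrum ℝ T) : ∃ c > 0, ∀ x, c * ‖x‖ ≤ ‖T x - (μ : ℂ) • x‖ := by
  rw [spectrum.notMem_iff, ← IsUnit.neg_iff, neg_sub] at hμ
  obtain ⟨u, hu⟩ := hμ
  have hK : 0 < ‖(↑u⁻¹ : H →L[ℂ] H)‖ + 1 := by positivity
  refine ⟨(‖(↑u⁻¹ : H →L[ℂ] H)‖ + 1)⁻¹, by positivity, fun x ↦ ?_⟩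
  have hx : (↑u⁻¹ : H →L[ℂ] H) (T x - (μ : ℂ) • x) = x := by
    have : (u : H →L[ℂ] H) x = T x - (μ : ℂ) • x := by
      simp [hu, Algebra.algebraMap_eq_smul_one]
    rw [← this]; exact congr($(u.inv_mul) x)
  rw [← div_eq_inv_mul, div_le_iff₀ hK]
  have := (↑u⁻¹ : H →L[ℂ] H).le_opNorm (T x - (μ : ℂ) • x)
  rw [hx] at this
  nlinarith [norm_nonneg (T x - (μ : ℂ) • x)]

/-- If `T` is bounded below away from `[-r, r]`, then `‖T‖ ≤ r`. -/
theorem IsSelfAdjoint.norm_le_of_mul_norm_le [CompleteSpace H] {T : H →L[ℂ] H}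
    (hT : IsSelfAdjoint T) {r : ℝ} (hr : 0 ≤ r)
    (h : ∀ μ : ℝ, r < |μ| → ∃ c > 0, ∀ x, c * ‖x‖ ≤ ‖T x - (μ : ℂ) • x‖) : ‖T‖ ≤ r := by
  rw [← cfc_id ℝ T hT]
  refine norm_cfc_le hr fun μ hμ ↦ ?_
  by_contra! hlt
  obtain ⟨c, hc, hcx⟩ := h μ hlt
  exact hT.notMem_spectrum_of_mul_norm_le hc hcx hμ

/-- The continuous cutoff which is one on `[-a, a]` and vanishes outside `(-b, b)`. -/
noncomputable def spectralCutoff (a b x : ℝ) : ℝ := max 0 (min 1 ((b - |x|) / (b - a)))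

theorem continuous_spectralCutoff (a b : ℝ) : Continuous (spectralCutoff a b) := by
  unfold spectralCutoff; fun_prop

theorem spectralCutoff_eq_one {a b x : ℝ} (hab : a < b) (hx : |x| ≤ a) :
    spectralCutoff a b x = 1 := by
  have : 1 ≤ (b - |x|) / (b - a) := by
    rw [one_le_div (sub_pos.mpr hab)]; linarith
  simp [spectralCutoff, this]

theorem spectralCutoff_eq_zero {a b x : ℝ} (hab : a < b) (hx : b ≤ |x|) :
    spectralCutoff a b x = 0 := by
  have : (b - |x|) / (b - a) ≤ 0 :=
    div_nonpos_of_nonpos_of_nonneg (by linarith) (by linarith)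
  simp [spectralCutoff, this]

section Cutoff

variable [CompleteSpace H] {T : H →L[ℂ] H} {a b : ℝ}

theorem isStarProjection_cfc_spectralCutoff (hab : a < b)
    (hspec : ∀ μ ∈ spectrum ℝ T, |μ| ≤ a ∨ b ≤ |μ|) :
    IsStarProjection (cfc (spectralCutoff a b) T) := by
  have hc := (continuous_spectralCutoff a b).continuousOn (s := spectrum ℝ T)
  refine ⟨?_, cfc_predicate _ T⟩
  rw [IsIdempotentElem, ← cfc_mul _ _ T hc hc]
  refine cfc_congr fun μ hμ ↦ ?_
  rcases hspec μ hμ with h | h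
  · simp [spectralCutoff_eq_one hab h]
  · simp [spectralCutoff_eq_zero hab h]

theorem norm_apply_le_of_cfc_spectralCutoff_apply_eq (hT : IsSelfAdjoint T) (ha : 0 < a)
    (hab : a < b) (hspec : ∀ μ ∈ spectrum ℝ T, |μ| ≤ a ∨ b ≤ |μ|) {x : H}
    (hx : cfc (spectralCutoff a b) T x = x) : ‖T x‖ ≤ a * ‖x‖ := by
  have hc := (continuous_spectralCutoff a b).continuousOn (s := spectrum ℝ T)
  have hTQ : cfc (fun μ ↦ μ * spectralCutoff a b μ) T = T * cfc (spectralCutoff a b) T := by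
    rw [cfc_mul (fun μ ↦ μ) _ T continuousOn_id hc, cfc_id' ℝ T]
  have hnorm : ‖T * cfc (spectralCutoff a b) T‖ ≤ a := by
    rw [← hTQ]
    refine norm_cfc_le ha.le fun μ hμ ↦ ?_
    rcases hspec μ hμ with h | h
    · simpa [spectralCutoff_eq_one hab h] using h
    · simpa [spectralCutoff_eq_zero hab h] using ha.le
  calc ‖T x‖ = ‖(T * cfc (spectralCutoff a b) T) x‖ := by rw [mul_apply_eq_comp, hx]
    _ ≤ _ := ContinuousLinearMap.le_of_opNorm_le _ hnorm x

theorem mul_norm_le_of_cfc_spectralCutoff_apply_eq_zero (hT : IsSelfAdjoint T) (ha : 0 < a)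
    (hab : a < b) (hspec : ∀ μ ∈ spectrum ℝ T, |μ| ≤ a ∨ b ≤ |μ|) {x : H}
    (hx : cfc (spectralCutoff a b) T x = 0) : b * ‖x‖ ≤ ‖T x‖ := by
  have hb : 0 < b := ha.trans hab
  have hc := (continuous_spectralCutoff a b).continuousOn (s := spectrum ℝ T)
  set g : ℝ → ℝ := fun μ ↦ μ * (1 - spectralCutoff a b μ) / max (μ ^ 2) (a ^ 2)
  have hgc : Continuous g := by
    have := continuous_spectralCutoff a b
    refine Continuous.div (by fun_prop) (by fun_prop) fun μ ↦ ?_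
    have : 0 < max (μ ^ 2) (a ^ 2) := lt_max_of_lt_right (by positivity)
    exact this.ne'
  have hg₁ (μ : ℝ) (h : |μ| ≤ a) : g μ = 0 := by simp [g, spectralCutoff_eq_one hab h]
  have hg₂ (μ : ℝ) (h : b ≤ |μ|) : g μ = μ⁻¹ := by
    have hμ : μ ≠ 0 := abs_pos.mp (hb.trans_le h)
    have : a ^ 2 ≤ μ ^ 2 := by rw [← sq_abs μ]; gcongr; linarith
    simp only [g, spectralCutoff_eq_zero hab h, max_eq_left this]
    field_simp
    simp
  have hgT : cfc g T * T = 1 - cfc (spectralCutoff a b) T := by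
    have hmul := cfc_mul g (fun μ ↦ μ) T hgc.continuousOn continuousOn_id
    rw [cfc_id' ℝ T] at hmul
    rw [← hmul, ← cfc_const_one ℝ T, ← cfc_sub _ _ T continuousOn_const hc]
    refine cfc_congr fun μ hμ ↦ ?_
    rcases hspec μ hμ with h | h
    · simp [hg₁ μ h, spectralCutoff_eq_one hab h]
    · simp [hg₂ μ h, spectralCutoff_eq_zero hab h, abs_pos.mp (hb.trans_le h)]
  have hnorm : ‖cfc g T‖ ≤ b⁻¹ := by
    refine norm_cfc_le (by positivity) fun μ hμ ↦ ?_
    rcases hspec μ hμ with h | h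
    · rw [hg₁ μ h, norm_zero]; positivity
    · rw [hg₂ μ h, norm_inv, Real.norm_eq_abs]; gcongr
  have := ContinuousLinearMap.le_of_opNorm_le _ hnorm (T x)
  rw [← mul_apply_eq_comp, hgT] at this
  simp only [sub_apply, one_apply_eq_self, hx, sub_zero] at this
  rwa [← div_eq_inv_mul, le_div_iff₀' hb] at this

end Cutoff

/-- A projection commuting with `T` which separates the part of `T` of size at most `a` from the
part of size at least `b` is unique. -/
theorem IsIdempotentElem.eq_of_commute_of_separates {T E Q : H →L[ℂ] H} {a b : ℝ}
    (hEE : IsIdempotentElem E) (hQQ : IsIdempotentElem Q) (hEQ : Commute E Q) (hab : a < b)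
    (hE : ∀ x, E x = x → ‖T x‖ ≤ a * ‖x‖) (hE' : ∀ x, E x = 0 → b * ‖x‖ ≤ ‖T x‖)
    (hQ : ∀ x, Q x = x → ‖T x‖ ≤ a * ‖x‖) (hQ' : ∀ x, Q x = 0 → b * ‖x‖ ≤ ‖T x‖) : E = Q := by
  have hzero {x : H} (h₁ : ‖T x‖ ≤ a * ‖x‖) (h₂ : b * ‖x‖ ≤ ‖T x‖) : x = 0 := by
    by_contra hx
    nlinarith [norm_pos_iff.mpr hx]
  have hE2 (x : H) : E (E x) = E x := congr($(hEE.eq) x)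
  have hQ2 (x : H) : Q (Q x) = Q x := congr($(hQQ.eq) x)
  have hcomm (x : H) : E (Q x) = Q (E x) := congr($(hEQ.eq) x)
  ext x
  have h₁ : E x - Q (E x) = 0 := by
    refine hzero (hE _ ?_) (hQ' _ ?_)
    · simp [hcomm, hE2]
    · simp [hQ2]
  have h₂ : Q x - E (Q x) = 0 := by
    refine hzero (hQ _ ?_) (hE' _ ?_)
    · simp [← hcomm, hQ2]
    · simp [hE2]
  exact (sub_eq_zero.mp h₁).trans ((hcomm x).symm.trans (sub_eq_zero.mp h₂).symm)

theorem norm_sub_lt_one_of_separates [CompleteSpace H] {P Q T V : H →L[ℂ] H} {r s ρ : ℝ}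
    (hP : IsStarProjection P) (hT : IsSelfAdjoint T) (hV : IsSelfAdjoint V) (hTP : Commute T P)
    (hPV : IsOffDiagonal P V)
    (hT₀ : ∀ x, P x = x → ‖T x‖ ≤ r * ‖x‖) (hT₁ : ∀ x, P x = 0 → ρ * ‖x‖ ≤ ‖T x‖)
    (hr : 0 ≤ r) (hs : 0 < s) (hsρ : r + s < ρ) (hVs : ‖V‖ ^ 2 < 2 * s ^ 2)
    (hQ : IsStarProjection Q) (hTQ : Commute (T + V) Q)
    (hQ₀ : ∀ x, Q x = x → ‖(T + V) x‖ ≤ (r + s) * ‖x‖)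
    (hQ₁ : ∀ x, Q x = 0 → ρ * ‖x‖ ≤ ‖(T + V) x‖) :
    ‖P - Q‖ < 1 := by
  have hrs : 0 < r + s := by linarith
  set B : ℝ → H →L[ℂ] H := fun t ↦ T + t • V with hB
  have hBsa (t : ℝ) : IsSelfAdjoint (B t) := hT.add ((IsSelfAdjoint.all t).smul hV)
  set F : ℝ → H →L[ℂ] H := fun t ↦ cfc (spectralCutoff (r + s) ρ) (B t) with hF
  have hVt (t : ℝ) (ht : t ∈ Set.Icc (0 : ℝ) 1) : ‖t • V‖ ≤ ‖V‖ := by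
    rw [norm_smul, Real.norm_of_nonneg ht.1]
    exact mul_le_of_le_one_left (norm_nonneg _) ht.2
  have hspec (t : ℝ) (ht : t ∈ Set.Icc (0 : ℝ) 1) :
      ∀ μ ∈ spectrum ℝ (B t), |μ| ≤ r + s ∨ ρ ≤ |μ| := by
    intro μ hμ
    by_contra! hcon
    obtain ⟨c, hc, hcx⟩ := exists_pos_mul_norm_le hP ((IsSelfAdjoint.all t).smul hV) hTP
      ⟨fun x ↦ by simp [P.map_smul_of_tower, hPV.apply_range],
        fun x ↦ by simp only [smul_apply, P.map_smul_of_tower, hPV.apply_ker]⟩ hT₀ hT₁ hr hs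
      (lt_of_le_of_lt (by gcongr; exact hVt t ht) hVs) hcon.1 hcon.2
    exact (hBsa t).notMem_spectrum_of_mul_norm_le hc hcx hμ
  have hFP (t : ℝ) (ht : t ∈ Set.Icc (0 : ℝ) 1) : IsStarProjection (F t) :=
    isStarProjection_cfc_spectralCutoff hsρ (hspec t ht)
  have hF₀ : P = F 0 := by
    have h0 : (0 : ℝ) ∈ Set.Icc (0 : ℝ) 1 := by simp
    have hB0 : B 0 = T := by simp [hB]
    refine IsIdempotentElem.eq_of_commute_of_separates (T := T) hP.isIdempotentElem
      (hFP 0 h0).isIdempotentElem ?_ hsρ (fun x hx ↦ (hT₀ x hx).trans (by gcongr; linarith)) hT₁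
      (fun x hx ↦ ?_) (fun x hx ↦ ?_)
    · exact ((hB0 ▸ hTP).cfc_real _).symm
    · exact hB0 ▸ norm_apply_le_of_cfc_spectralCutoff_apply_eq (hBsa 0) hrs hsρ (hspec 0 h0) hx
    · exact hB0 ▸ mul_norm_le_of_cfc_spectralCutoff_apply_eq_zero (hBsa 0) hrs hsρ (hspec 0 h0) hx
  have hF₁ : Q = F 1 := by
    have h1 : (1 : ℝ) ∈ Set.Icc (0 : ℝ) 1 := by simp
    have hB1 : B 1 = T + V := by simp [hB]
    refine IsIdempotentElem.eq_of_commute_of_separates (T := T + V) hQ.isIdempotentElem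
      (hFP 1 h1).isIdempotentElem ?_ hsρ hQ₀ hQ₁ (fun x hx ↦ ?_) (fun x hx ↦ ?_)
    · exact ((hB1 ▸ hTQ).cfc_real _).symm
    · exact hB1 ▸ norm_apply_le_of_cfc_spectralCutoff_apply_eq (hBsa 1) hrs hsρ (hspec 1 h1) hx
    · exact hB1 ▸ mul_norm_le_of_cfc_spectralCutoff_apply_eq_zero (hBsa 1) hrs hsρ (hspec 1 h1) hx
  set ε := (ρ - (r + s)) / (ρ + ‖V‖) with hεdef
  have hρ : 0 < ρ := by linarith
  have hρV : 0 < ρ + ‖V‖ := by positivity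
  have hε : 0 < ε := div_pos (by linarith) hρV
  have hε1 : ε ≤ 1 := by rw [div_le_one hρV]; linarith [norm_nonneg V]
  have hlow (t : ℝ) (ht : t ∈ Set.Icc (0 : ℝ) 1) (x : H) (hx : F t x = x) :
      ε * ‖x‖ ≤ ‖P x‖ := by
    have hBx := norm_apply_le_of_cfc_spectralCutoff_apply_eq (hBsa t) hrs hsρ (hspec t ht) hx
    have hPT (y : H) : P (T y) = T (P y) := congr($(hTP.eq.symm) y)
    have hdec : T (x - P x) = (B t x - P (B t x)) - t • V (P x) := by
      have h₁ := hPV.apply_ker x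
      have h₂ := hPV.apply_range x
      simp only [map_sub, h₂, sub_zero] at h₁
      simp only [hB, add_apply, smul_apply, map_add, hPT, P.map_smul_of_tower, h₁, map_sub,
        smul_sub]
      abel
    have hup : ‖T (x - P x)‖ ≤ (r + s) * ‖x‖ + ‖V‖ * ‖P x‖ := by
      rw [hdec]
      refine (norm_sub_le _ _).trans (add_le_add ((hP.norm_sub_apply_le _).trans hBx) ?_)
      exact ContinuousLinearMap.le_of_opNorm_le (t • V) (hVt t ht) (P x)
    have := hT₁ (x - P x) (by simp [hP.apply_apply])
    have htri : ‖x‖ ≤ ‖P x‖ + ‖x - P x‖ := by simpa using norm_add_le (P x) (x - P x)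
    rw [hεdef, div_mul_eq_mul_div, div_le_iff₀ hρV]
    nlinarith
  have hFcont : ContinuousOn F (Set.Icc 0 1) := by
    refine ContinuousOn.cfc' (s := Metric.closedBall 0 (‖T‖ + ‖V‖)) (isCompact_closedBall _ _) _
      (by fun_prop) (fun t ht μ hμ ↦ ?_) (fun t _ ↦ hBsa t)
      (continuous_spectralCutoff _ _).continuousOn
    rw [mem_closedBall_zero_iff]
    refine (spectrum.norm_le_norm_mul_of_mem hμ).trans ?_
    calc ‖B t‖ * ‖(1 : H →L[ℂ] H)‖ ≤ ‖B t‖ * 1 := by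
          gcongr; exact ContinuousLinearMap.norm_id_le
      _ ≤ ‖T‖ + ‖V‖ := by
          rw [mul_one]
          exact (norm_add_le _ _).trans (add_le_add_right (hVt t ht) _)
  have hgap (t : ℝ) (ht : t ∈ Set.Icc (0 : ℝ) 1) (h : ‖P - F t‖ < 1) :
      ‖P - F t‖ ≤ √(1 - ε ^ 2) :=
    hP.norm_sub_le_of_norm_sub_lt_one (hFP t ht) hε.le hε1 (hlow t ht) h
  have hsq : √(1 - ε ^ 2) < 1 := by
    rw [Real.sqrt_lt' one_pos]; nlinarith
  obtain ⟨m, hm₁, hm₂⟩ := exists_between hsq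
  rw [hF₁]
  by_contra! hcon
  obtain ⟨t, ht, htm⟩ := intermediate_value_Icc zero_le_one
    (f := fun t ↦ ‖P - F t‖) (continuousOn_const.sub hFcont).norm
    (show m ∈ Set.Icc ‖P - F 0‖ ‖P - F 1‖ from
      ⟨by rw [← hF₀, sub_self, norm_zero]; exact (Real.sqrt_nonneg _).trans hm₁.le,
        hm₂.le.trans hcon⟩)
  have := hgap t ht (htm.trans_lt hm₂)
  exact absurd (htm ▸ this) hm₁.not_ge

namespace IsSpectralMeasure

variable [CompleteSpace H] {T : H →L[ℂ] H} {E : Set ℝ → H →L[ℂ] H}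

theorem map_empty (hE : IsSpectralMeasure T E) : E ∅ = 0 := by
  ext x
  have h := hE.countably_additive (fun _ ↦ ∅) (fun _ ↦ .empty) (fun _ _ _ ↦ disjoint_bot_left) x
  exact tendsto_const_nhds_iff.mp h.summable.tendsto_atTop_zero

theorem isStarProjection (hE : IsSpectralMeasure T E) {Δ : Set ℝ} (hΔ : MeasurableSet Δ) :
    IsStarProjection (E Δ) :=
  ⟨by rw [IsIdempotentElem, hE.map_inter _ _ hΔ hΔ, Set.inter_self], hE.isSelfAdjoint Δ hΔ⟩

theorem map_union (hE : IsSpectralMeasure T E) {Δ₁ Δ₂ : Set ℝ} (h₁ : MeasurableSet Δ₁)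
    (h₂ : MeasurableSet Δ₂) (hd : Disjoint Δ₁ Δ₂) : E (Δ₁ ∪ Δ₂) = E Δ₁ + E Δ₂ := by
  ext x
  set f : ℕ → Set ℝ := fun n ↦ Nat.casesOn n Δ₁ fun m ↦ Nat.casesOn m Δ₂ fun _ ↦ ∅
  have hf : ∀ n, MeasurableSet (f n) := by
    rintro (_ | _ | n)
    exacts [h₁, h₂, .empty]
  have hdf : Pairwise (Function.onFun Disjoint f) := by
    rintro (_ | _ | m) (_ | _ | n) hmn
    all_goals first
      | exact absurd rfl hmn
      | exact hd
      | exact hd.symm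
      | exact disjoint_bot_left
      | exact disjoint_bot_right
  have hU : ⋃ n, f n = Δ₁ ∪ Δ₂ := by
    ext y
    simp only [Set.mem_iUnion, Set.mem_union]
    constructor
    · rintro ⟨_ | _ | n, hn⟩
      exacts [.inl hn, .inr hn, hn.elim]
    · rintro (h | h)
      exacts [⟨0, h⟩, ⟨1, h⟩]
  have hsum := hE.countably_additive f hf hdf x
  rw [hU] at hsum
  have hfin : HasSum (fun n ↦ E (f n) x) (∑ n ∈ Finset.range 2, E (f n) x) := by
    refine hasSum_sum_of_ne_finset_zero fun n hn ↦ ?_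
    match n with
    | 0 | 1 => simp at hn
    | n + 2 => exact congr($(hE.map_empty) x)
  rw [hsum.unique hfin, Finset.sum_range_succ, Finset.sum_range_one]
  rfl

theorem map_eq_zero_of_subset (hE : IsSpectralMeasure T E) {Δ₁ Δ₂ : Set ℝ}
    (h₁ : MeasurableSet Δ₁) (h₂ : MeasurableSet Δ₂) (h : Δ₁ ⊆ Δ₂) (h0 : E Δ₂ = 0) : E Δ₁ = 0 := by
  rw [← Set.inter_eq_left.mpr h, ← hE.map_inter _ _ h₁ h₂, h0, mul_zero]

theorem map_eq_zero_of_subset_iUnion (hE : IsSpectralMeasure T E) {Δ : Set ℝ} {f : ℕ → Set ℝ}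
    (hΔ : MeasurableSet Δ) (hf : ∀ n, MeasurableSet (f n)) (h : Δ ⊆ ⋃ n, f n)
    (h0 : ∀ n, E (f n) = 0) : E Δ = 0 := by
  refine hE.map_eq_zero_of_subset hΔ (.iUnion hf) h ?_
  have hm (n : ℕ) : MeasurableSet (disjointed f n) := .disjointed hf n
  have hz (n : ℕ) : E (disjointed f n) = 0 :=
    hE.map_eq_zero_of_subset (hm n) (hf n) (disjointed_subset f n) (h0 n)
  ext x
  have hsum := hE.countably_additive _ hm (disjoint_disjointed f) x
  rw [iUnion_disjointed] at hsum
  simp only [hz, zero_apply] at hsum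
  exact hsum.unique hasSum_zero

/-- On the range of `E Δ` with `Δ ⊆ [c - r, c + r]`, the operator `T - c` has norm at most `r`. -/
theorem norm_sub_le (hE : IsSpectralMeasure T E) (hT : IsSelfAdjoint T) {Δ : Set ℝ} {c r : ℝ}
    (hΔ : MeasurableSet Δ) (hr : 0 ≤ r) (hne : Δ.Nonempty) (hsub : Δ ⊆ Metric.closedBall c r)
    {x : H} (hx : E Δ x = x) : ‖T x - (c : ℂ) • x‖ ≤ r * ‖x‖ := by
  have hP := hE.isStarProjection hΔ
  set C := T - algebraMap ℝ (H →L[ℂ] H) c with hC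
  have hCx (y : H) : C y = T y - (c : ℂ) • y := by
    simp [hC, Algebra.algebraMap_eq_smul_one]
  have hcomm : Commute C (E Δ) := (hE.commutes Δ hΔ).sub_left (Algebra.commutes c (E Δ))
  have hsa : IsSelfAdjoint (C * E Δ) :=
    (IsSelfAdjoint.commute_iff (hT.sub (.algebraMap _ (.all c))) hP.isSelfAdjoint).mp hcomm
  have hnorm : ‖C * E Δ‖ ≤ r := by
    refine hsa.norm_le_of_mul_norm_le hr fun μ hμ ↦ ⟨|μ| - r, sub_pos.mpr hμ, fun y ↦ ?_⟩
    set y₀ := E Δ y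
    have hy₀ : E Δ y₀ = y₀ := hP.apply_apply y
    have hEC (z : H) : E Δ (C z) = C (E Δ z) := congr($(hcomm.eq.symm) z)
    have hdec : (C * E Δ) y - (μ : ℂ) • y =
        (C y₀ - (μ : ℂ) • y₀) + (-(μ : ℂ) • (y - y₀)) := by
      rw [mul_apply_eq_comp, smul_sub, neg_smul, neg_smul]; abel
    have hloc : (|μ| - r) * ‖y₀‖ ≤ ‖C y₀ - (μ : ℂ) • y₀‖ := by
      have h₁ := hE.spectrum_loc Δ hΔ y₀ hy₀ (c + μ)
      have h₂ : |μ| - r ≤ Metric.infDist (c + μ) Δ := by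
        rw [Metric.le_infDist hne]
        intro z hz
        have h₃ := hsub hz
        rw [Metric.mem_closedBall, Real.dist_eq] at h₃
        rw [Real.dist_eq]
        have := abs_sub_abs_le_abs_sub μ (z - c)
        rw [show c + μ - z = μ - (z - c) by ring]
        linarith
      rw [hCx]
      refine (mul_le_mul_of_nonneg_right h₂ (norm_nonneg _)).trans (h₁.trans_eq ?_)
      congr 1
      push_cast
      rw [add_smul]; abel
    refine le_of_sq_le_sq ?_ (norm_nonneg _)
    rw [hdec, hP.norm_add_sq_eq (by simp [hEC, hy₀]) (by simp [y₀, hP.apply_apply]), mul_pow,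
      hP.norm_sq_eq y, mul_add, ← mul_pow, ← mul_pow, norm_smul, norm_neg, Complex.norm_real,
      Real.norm_eq_abs]
    have : 0 ≤ |μ| - r := by linarith
    gcongr
    linarith
  calc ‖T x - (c : ℂ) • x‖ = ‖(C * E Δ) x‖ := by rw [mul_apply_eq_comp, hx, hCx]
    _ ≤ r * ‖x‖ := ContinuousLinearMap.le_of_opNorm_le _ hnorm x

theorem map_eq_zero (hE : IsSpectralMeasure T E) (hT : IsSelfAdjoint T) {Δ : Set ℝ}
    (hΔ : MeasurableSet Δ)
    (h : ∀ μ ∈ Δ, ∃ c > 0, ∀ x, c * ‖x‖ ≤ ‖T x - ((μ : ℝ) : ℂ) • x‖) : E Δ = 0 := by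
  have hloc (μ : ℝ) (hμ : μ ∈ Δ) : ∃ δ > 0, E (Metric.ball μ δ) = 0 := by
    obtain ⟨c, hc, hcx⟩ := h μ hμ
    refine ⟨c / 2, by positivity, ?_⟩
    ext x
    have hm : MeasurableSet (Metric.ball μ (c / 2)) := measurableSet_ball
    have h₁ := hE.norm_sub_le hT hm (half_pos hc).le ⟨μ, Metric.mem_ball_self (half_pos hc)⟩
      Metric.ball_subset_closedBall ((hE.isStarProjection hm).apply_apply x)
    have h₂ := hcx (E (Metric.ball μ (c / 2)) x)
    rw [zero_apply, ← norm_le_zero_iff]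
    nlinarith [norm_nonneg (E (Metric.ball μ (c / 2)) x)]
  choose! δ hδ hδ0 using hloc
  obtain ⟨t, htΔ, htc, ht⟩ := TopologicalSpace.countable_cover_nhdsWithin
    (f := fun μ ↦ Metric.ball μ (δ μ)) (s := Δ)
    fun μ hμ ↦ mem_nhdsWithin_of_mem_nhds (Metric.ball_mem_nhds μ (hδ μ hμ))
  rcases t.eq_empty_or_nonempty with rfl | hne
  · obtain rfl : Δ = ∅ := by simpa using ht
    exact hE.map_empty
  · obtain ⟨g, rfl⟩ := htc.exists_eq_range hne
    exact hE.map_eq_zero_of_subset_iUnion hΔ (fun n ↦ measurableSet_ball) (by simpa using ht)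
      fun n ↦ hδ0 _ (htΔ ⟨n, rfl⟩)

theorem map_congr (hE : IsSpectralMeasure T E) (hT : IsSelfAdjoint T) {Δ₁ Δ₂ : Set ℝ}
    (h₁ : MeasurableSet Δ₁) (h₂ : MeasurableSet Δ₂)
    (h : ∀ μ, ¬(μ ∈ Δ₁ ↔ μ ∈ Δ₂) → ∃ c > 0, ∀ x, c * ‖x‖ ≤ ‖T x - ((μ : ℝ) : ℂ) • x‖) :
    E Δ₁ = E Δ₂ := by
  have e₁ : E Δ₁ = E (Δ₁ ∩ Δ₂) + E (Δ₁ \ Δ₂) := by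
    rw [← hE.map_union (h₁.inter h₂) (h₁.diff h₂) Set.disjoint_sdiff_inter.symm,
      Set.inter_union_sdiff]
  have e₂ : E Δ₂ = E (Δ₁ ∩ Δ₂) + E (Δ₂ \ Δ₁) := by
    rw [Set.inter_comm, ← hE.map_union (h₂.inter h₁) (h₂.diff h₁) Set.disjoint_sdiff_inter.symm,
      Set.inter_union_sdiff]
  rw [e₁, e₂, hE.map_eq_zero hT (h₁.diff h₂) fun μ hμ ↦ h μ (by simp [hμ.1, hμ.2]),
    hE.map_eq_zero hT (h₂.diff h₁) fun μ hμ ↦ h μ (by simp [hμ.1, hμ.2])]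

end IsSpectralMeasure

theorem IsOffDiagonal.of_mul_mul_eq_zero {P R V : H →L[ℂ] H} (hPR : P + R = 1)
    (h₁ : P * V * P = 0) (h₂ : R * V * R = 0) : IsOffDiagonal P V := by
  have hR (x : H) : R x = x - P x := by
    rw [eq_sub_iff_add_eq, add_comm]; exact congr($hPR x)
  refine ⟨fun x ↦ congr($h₁ x), fun x ↦ ?_⟩
  have := congr($h₂ x)
  simp only [mul_apply_eq_comp, zero_apply, hR] at this
  exact (sub_eq_zero.mp this).symm

theorem exists_Icc_of_isCompact_of_disjoint_convexHull {σ τ : Set ℝ} {d : ℝ} (hσ : IsCompact σ)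
    (hne : σ.Nonempty) (hconv : Disjoint (convexHull ℝ σ) τ)
    (hd : ∀ x ∈ σ, ∀ y ∈ τ, d ≤ dist x y) :
    ∃ a ∈ σ, ∃ b ∈ σ, σ ⊆ Set.Icc a b ∧ ∀ y ∈ τ, y ≤ a - d ∨ b + d ≤ y := by
  refine ⟨sInf σ, hσ.sInf_mem hne, sSup σ, hσ.sSup_mem hne,
    fun x hx ↦ ⟨csInf_le hσ.bddBelow hx, le_csSup hσ.bddAbove hx⟩, fun y hy ↦ ?_⟩
  have ha := hd _ (hσ.sInf_mem hne) y hy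
  have hb := hd _ (hσ.sSup_mem hne) y hy
  rw [Real.dist_eq] at ha hb
  rcases le_total y (sInf σ) with h | h
  · left; rw [abs_of_nonneg (by linarith)] at ha; linarith
  · rcases le_total (sSup σ) y with h' | h'
    · right; rw [abs_of_nonpos (by linarith)] at hb; linarith
    · refine absurd hy (hconv.notMem_of_mem_left ?_)
      have : segment ℝ (sInf σ) (sSup σ) ⊆ convexHull ℝ σ :=
        segment_subset_convexHull (hσ.sInf_mem hne) (hσ.sSup_mem hne)
      rw [segment_eq_Icc (h.trans h')] at this
      exact this ⟨h, h'⟩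

theorem IsSpectralMeasure.map_add_map_of_spectrum_eq_union [CompleteSpace H] {T : H →L[ℂ] H}
    {E : Set ℝ → H →L[ℂ] H} (hE : IsSpectralMeasure T E) (hT : IsSelfAdjoint T) {σ τ : Set ℝ}
    (hσ : MeasurableSet σ) (hτ : MeasurableSet τ) (hd : Disjoint σ τ)
    (hspec : spectrum ℝ T = σ ∪ τ) : E σ + E τ = 1 := by
  rw [← hE.map_union hσ hτ hd, ← hE.map_univ]
  refine hE.map_congr hT (hσ.union hτ) .univ fun μ hμ ↦
    exists_pos_mul_norm_le_of_notMem_spectrum fun h ↦ hμ ?_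
  rw [hspec] at h
  exact iff_of_true h trivial

theorem IsSpectralMeasure.mul_norm_le [CompleteSpace H] {T : H →L[ℂ] H}
    {E : Set ℝ → H →L[ℂ] H} (hE : IsSpectralMeasure T E) {Δ : Set ℝ} (hΔ : MeasurableSet Δ)
    (hne : Δ.Nonempty) {μ ρ : ℝ} (h : ∀ y ∈ Δ, ρ ≤ |μ - y|) {x : H} (hx : E Δ x = x) :
    ρ * ‖x‖ ≤ ‖T x - (μ : ℂ) • x‖ :=
  (mul_le_mul_of_nonneg_right ((Metric.le_infDist hne).mpr h)
    (norm_nonneg x)).trans (hE.spectrum_loc Δ hΔ x hx μ)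

end

/-- **Lemma 2.6.** If the convex hull of `σ` does not intersect `Σ` and `‖V‖ < √2 d`,
then `‖E_A(σ) − E_B(O_d(σ))‖ < 1`. -/
theorem norm_diff_projections_lt_one_of_convexHull_disjoint
    {H : Type*} [NormedAddCommGroup H] [InnerProductSpace ℂ H] [CompleteSpace H]
    [TopologicalSpace.SeparableSpace H]
    (A V B : H →L[ℂ] H) (hA : IsSelfAdjoint A) (hV : IsSelfAdjoint V) (hB : B = A + V)
    (σ Sig : Set ℝ) (hσc : IsClosed σ) (hSigc : IsClosed Sig) (hdisj : Disjoint σ Sig)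
    (hspec : spectrum ℝ A = σ ∪ Sig)
    (d : ℝ) (hd : d = sInf (Set.image2 dist σ Sig)) (hd0 : 0 < d)
    (EA EB : Set ℝ → H →L[ℂ] H) (hEA : IsSpectralMeasure A EA) (hEB : IsSpectralMeasure B EB)
    (hoff₁ : EA σ * V * EA σ = 0) (hoff₂ : EA Sig * V * EA Sig = 0)
    (hconv : Disjoint (convexHull ℝ σ) Sig)
    (hnorm : ‖V‖ < Real.sqrt 2 * d) :
    ‖EA σ - EB (Metric.thickening d σ)‖ < 1 := by
  have hne : (Set.image2 dist σ Sig).Nonempty := by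
    by_contra h
    rw [Set.not_nonempty_iff_eq_empty.mp h, Real.sInf_empty] at hd
    exact hd0.ne' hd
  have hσne : σ.Nonempty := hne.of_image2_left
  have hSigne : Sig.Nonempty := hne.of_image2_right
  have hdist (x : ℝ) (hx : x ∈ σ) (y : ℝ) (hy : y ∈ Sig) : d ≤ dist x y :=
    hd ▸ csInf_le ⟨0, by rintro _ ⟨_, _, _, _, rfl⟩; exact dist_nonneg⟩ ⟨x, hx, y, hy, rfl⟩
  have hσK : IsCompact σ :=
    (spectrum.isCompact (𝕜 := ℝ) A).of_isClosed_subset hσc (hspec ▸ Set.subset_union_left)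
  obtain ⟨a, ha, b, hb, hσab, hSig⟩ :=
    exists_Icc_of_isCompact_of_disjoint_convexHull hσK hσne hconv hdist
  have hab : a ≤ b := (hσab ha).2
  have hσm := hσc.measurableSet
  have hSigm := hSigc.measurableSet
  obtain ⟨s, hVs', hsd⟩ := exists_between ((div_lt_iff₀' (Real.sqrt_pos.mpr two_pos)).mpr hnorm)
  have hs : 0 < s := lt_of_le_of_lt (by positivity) hVs'
  have hVs : ‖V‖ ^ 2 < 2 * s ^ 2 := by
    rw [div_lt_iff₀' (by positivity)] at hVs'
    calc ‖V‖ ^ 2 < (√2 * s) ^ 2 := by gcongr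
      _ = 2 * s ^ 2 := by rw [mul_pow, Real.sq_sqrt two_pos.le]
  have hVd : ‖V‖ ^ 2 < 2 * d ^ 2 := hVs.trans (by gcongr)
  set c := (a + b) / 2 with hc
  set r := (b - a) / 2 with hr
  have hr0 : 0 ≤ r := by linarith
  have hrs : r + s < r + d := by linarith
  have hBsa : IsSelfAdjoint B := hB ▸ hA.add hV
  have hP := hEA.isStarProjection hσm
  have hPR := hEA.map_add_map_of_spectrum_eq_union hA hσm hSigm hdisj hspec
  have hPV : IsOffDiagonal (EA σ) V := .of_mul_mul_eq_zero hPR hoff₁ hoff₂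
  have hR {x : H} (hx : EA σ x = 0) : EA Sig x = x := by simpa [hx] using congr($hPR x)
  set T : ℝ → H →L[ℂ] H := fun μ ↦ A - algebraMap ℝ (H →L[ℂ] H) μ with hT
  have hTx (μ : ℝ) (x : H) : T μ x = A x - (μ : ℂ) • x := by
    simp [hT, Algebra.algebraMap_eq_smul_one]
  have hTP (μ : ℝ) : Commute (T μ) (EA σ) :=
    (hEA.commutes σ hσm).sub_left (Algebra.commutes μ (EA σ))
  have hTV (μ : ℝ) (x : H) : T μ x + V x = B x - (μ : ℂ) • x := by
    rw [hTx, hB, add_apply]; abel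
  have hT₀ (x : H) (hx : EA σ x = x) : ‖T c x‖ ≤ r * ‖x‖ := by
    rw [hTx]
    refine hEA.norm_sub_le hA hσm hr0 hσne (fun y hy ↦ ?_) hx
    rw [Real.closedBall_eq_Icc]
    constructor <;> linarith [(hσab hy).1, (hσab hy).2]
  have hT₁ (x : H) (hx : EA σ x = 0) : (r + d) * ‖x‖ ≤ ‖T c x‖ := by
    rw [hTx]
    refine hEA.mul_norm_le hSigm hSigne (fun y hy ↦ ?_) (hR hx)
    rw [le_abs']
    rcases hSig y hy with h | h
    · right; linarith
    · left; linarith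
  have hgap (μ : ℝ) (h₁ : r + s < |μ - c|) (h₂ : |μ - c| < r + d) :
      ∃ ε > 0, ∀ x, ε * ‖x‖ ≤ ‖B x - (μ : ℂ) • x‖ := by
    obtain ⟨ε, hε, hεx⟩ := exists_pos_mul_norm_le hP hV (hTP c) hPV hT₀ hT₁ hr0 hs hVs h₁ h₂
    refine ⟨ε, hε, fun x ↦ (hεx x).trans_eq ?_⟩
    rw [hTV, sub_sub, ← add_smul, ← Complex.ofReal_add, add_sub_cancel]
  have hhole (μ : ℝ) (h₁ : μ ∈ Set.Icc a b) (h₂ : μ ∉ Metric.thickening d σ) :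
      ∃ ε > 0, ∀ x, ε * ‖x‖ ≤ ‖B x - (μ : ℂ) • x‖ := by
    have hfar (y : ℝ) (hy : y ∈ σ) : d ≤ |μ - y| :=
      not_lt.mp fun h ↦ h₂ (Metric.mem_thickening_iff.mpr ⟨y, hy, h⟩)
    have hμa := hfar a ha
    have hμb := hfar b hb
    rw [abs_of_nonneg (sub_nonneg.mpr h₁.1)] at hμa
    rw [abs_of_nonpos (sub_nonpos.mpr h₁.2)] at hμb
    simp only [← hTV μ]
    refine exists_pos_mul_norm_le_of_blocks hP (hTP μ) hPV (fun x hx ↦ ?_) (fun x hx ↦ ?_) hd0 hVd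
    · rw [hTx]; exact hEA.mul_norm_le hσm hσne hfar hx
    · rw [hTx]
      refine hEA.mul_norm_le hSigm hSigne (fun y hy ↦ ?_) (hR hx)
      rw [le_abs']
      rcases hSig y hy with h | h
      · right; linarith
      · left; linarith
  have hK : MeasurableSet (Metric.closedBall c (r + s)) := measurableSet_closedBall
  have hO : MeasurableSet (Metric.ball c (r + d))ᶜ := measurableSet_ball.compl
  have hEO : EB (Metric.thickening d σ) = EB (Metric.closedBall c (r + s)) := by
    refine hEB.map_congr hBsa Metric.isOpen_thickening.measurableSet hK fun μ hμ ↦ ?_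
    rw [Metric.mem_closedBall, Real.dist_eq] at hμ
    by_cases hμt : μ ∈ Metric.thickening d σ
    · refine hgap μ (not_le.mp fun h ↦ hμ (iff_of_true hμt h)) ?_
      obtain ⟨y, hy, hyd⟩ := Metric.mem_thickening_iff.mp hμt
      rw [Real.dist_eq, abs_lt] at hyd
      rw [abs_lt]
      constructor <;> linarith [(hσab hy).1, (hσab hy).2]
    · have hμc : |μ - c| ≤ r + s := by
        by_contra h
        exact hμ (iff_of_false hμt h)
      refine hhole μ ?_ hμt
      have hfar (y : ℝ) (hy : y ∈ σ) : d ≤ |μ - y| :=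
        not_lt.mp fun h ↦ hμt (Metric.mem_thickening_iff.mpr ⟨y, hy, h⟩)
      rw [abs_le] at hμc
      constructor
      · by_contra! h
        have := hfar a ha
        rw [abs_of_nonpos (by linarith)] at this
        linarith
      · by_contra! h
        have := hfar b hb
        rw [abs_of_nonneg (by linarith)] at this
        linarith
  have hEc : EB (Metric.closedBall c (r + s)) + EB (Metric.ball c (r + d))ᶜ = 1 := by
    rw [← hEB.map_union hK hO, ← hEB.map_univ]
    · refine hEB.map_congr hBsa (hK.union hO) .univ fun μ hμ ↦ ?_
      simp only [Set.mem_union, Metric.mem_closedBall, Set.mem_compl_iff, Metric.mem_ball,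
        Set.mem_univ, iff_true, not_or, not_le, not_not, Real.dist_eq] at hμ
      exact hgap μ hμ.1 hμ.2
    · exact Set.disjoint_compl_right_iff_subset.mpr (Metric.closedBall_subset_ball hrs)
  rw [hEO]
  have hTVB : T c + V = B - algebraMap ℝ (H →L[ℂ] H) c := by
    rw [hB]; exact sub_add_eq_add_sub A _ V
  refine norm_sub_lt_one_of_separates hP (hA.sub (.algebraMap _ (.all c))) hV (hTP c) hPV hT₀ hT₁
    hr0 hs hrs hVs (hEB.isStarProjection hK) ?_ (fun x hx ↦ ?_) (fun x hx ↦ ?_)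
  · exact hTVB ▸ (hEB.commutes _ hK).sub_left (Algebra.commutes c _)
  · rw [add_apply, hTV]
    exact hEB.norm_sub_le hBsa hK (by linarith) ⟨c, Metric.mem_closedBall_self (by linarith)⟩
      subset_rfl hx
  · rw [add_apply, hTV]
    refine hEB.mul_norm_le hO ⟨c + (r + d), ?_⟩ (fun y hy ↦ ?_) (by simpa [hx] using congr($hEc x))
    · simp [le_abs_self]
    · simpa [Real.dist_eq, abs_sub_comm] using hy
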